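/- Let G be a graph, v a vertex of G, and K a maximal clique of G with v ∈ K such that K \ {v} is not a maximal clique of G \ {v}. Then there exists a vertex u with u ≠ v and u not adjacent to v such that K \ {v} ⊆ N(v) ∩ N(u); moreover, K \ {v} is a maximal clique of the induced subgraph G[N(v) ∩ N(u)]. -/

import Mathlib

/-- `K` is a maximal clique of `G`: a clique not properly contained in any other clique. -/
def IsMaxClique {V : Type*} (G : SimpleGraph V) (K : Set V) : Prop :=
  G.IsClique K ∧ ∀ K' : Set V, G.IsClique K' → K ⊆ K' → K = K'

/-- `K` is a maximal clique of the subgraph of `G` induced by `S`: a clique of `G`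
contained in `S` that is not properly contained in any other clique of `G`
contained in `S`.  (Cliques of `G[S]` are exactly cliques of `G` contained in `S`.) -/
def IsMaxCliqueIn {V : Type*} (G : SimpleGraph V) (S : Set V) (K : Set V) : Prop :=
  K ⊆ S ∧ G.IsClique K ∧ ∀ K' : Set V, K' ⊆ S → G.IsClique K' → K ⊆ K' → K = K'

/-!
A clique is maximal exactly when no vertex is adjacent to all of its members. A vertex `u ≠ v`
witnessing that `K \ {v}` is not maximal in `G \ {v}` is therefore adjacent to all of `K \ {v}`.
No neighbor of `v` can be adjacent to all of `K \ {v}`, since it would then be adjacent to all of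
the maximal clique `K`. This shows both that `u` is not a neighbor of `v` and that `K \ {v}` cannot
be extended inside `N(v)`, let alone inside `N(v) ∩ N(u)`.
-/

section MaximalCliques

variable {V : Type*} {G : SimpleGraph V} {S K : Set V} {v w : V}

theorem isMaxCliqueIn_iff_forall_not_subset_neighborSet :
    IsMaxCliqueIn G S K ↔ K ⊆ S ∧ G.IsClique K ∧ ∀ u ∈ S, ¬ K ⊆ G.neighborSet u := by
  constructor
  · rintro ⟨hKS, hK, hmax⟩
    refine ⟨hKS, hK, fun u huS hKu => ?_⟩
    have heq : K = insert u K :=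
      hmax _ (Set.insert_subset huS hKS) (hK.insert fun x hx _ => hKu hx) (Set.subset_insert u K)
    have huK : u ∈ K := heq ▸ Set.mem_insert u K
    exact G.irrefl (hKu huK)
  · rintro ⟨hKS, hK, hext⟩
    refine ⟨hKS, hK, fun K' hK'S hK' hKK' => hKK'.antisymm fun u hu => ?_⟩
    by_contra huK
    exact hext u (hK'S hu) fun x hx => hK' hu (hKK' hx) (ne_of_mem_of_not_mem hx huK).symm

theorem isMaxCliqueIn_univ : IsMaxCliqueIn G Set.univ K ↔ IsMaxClique G K := by
  simp [IsMaxCliqueIn, IsMaxClique]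

theorem IsMaxClique.not_subset_neighborSet (hK : IsMaxClique G K) (w : V) :
    ¬ K ⊆ G.neighborSet w :=
  (isMaxCliqueIn_iff_forall_not_subset_neighborSet.1 (isMaxCliqueIn_univ.2 hK)).2.2 w
    (Set.mem_univ w)

theorem IsMaxClique.not_sdiff_singleton_subset_neighborSet (hK : IsMaxClique G K)
    (hwv : G.Adj w v) : ¬ K \ {v} ⊆ G.neighborSet w := fun hKw =>
  hK.not_subset_neighborSet w <|
    (Set.sdiff_singleton_subset_iff.1 hKw).trans (Set.insert_subset hwv subset_rfl)

theorem IsMaxClique.isMaxCliqueIn_sdiff_singleton (hK : IsMaxClique G K)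
    (hKS : K \ {v} ⊆ S) (hSv : S ⊆ G.neighborSet v) : IsMaxCliqueIn G S (K \ {v}) :=
  isMaxCliqueIn_iff_forall_not_subset_neighborSet.2
    ⟨hKS, hK.1.subset Set.sdiff_subset, fun _ hw =>
      hK.not_sdiff_singleton_subset_neighborSet (hSv hw).symm⟩

theorem sdiff_singleton_subset_neighborSet_of_isClique (hK : G.IsClique K) (hv : v ∈ K) :
    K \ {v} ⊆ G.neighborSet v :=
  fun _ hx => hK hv hx.1 (Ne.symm hx.2)

theorem exists_subset_neighborSet_of_not_isMaxCliqueIn (hKS : K ⊆ S) (hK : G.IsClique K)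
    (hnot : ¬ IsMaxCliqueIn G S K) : ∃ u ∈ S, K ⊆ G.neighborSet u := by
  contrapose! hnot
  exact isMaxCliqueIn_iff_forall_not_subset_neighborSet.2 ⟨hKS, hK, hnot⟩

end MaximalCliques

/-- If `K` is a maximal clique of `G` containing `v` such that `K \ {v}` is not a
maximal clique of `G \ {v}`, then there is a non-neighbor `u ≠ v` of `v` with
`K \ {v} ⊆ N(v) ∩ N(u)`, and `K \ {v}` is a maximal clique of `G[N(v) ∩ N(u)]`. -/
theorem maxClique_case_three {V : Type*} (G : SimpleGraph V) (v : V)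
    (K : Set V) (hK : IsMaxClique G K) (hv : v ∈ K)
    (hnot : ¬ IsMaxCliqueIn G {u : V | u ≠ v} (K \ {v})) :
    ∃ u : V, u ≠ v ∧ ¬ G.Adj u v ∧
      K \ {v} ⊆ G.neighborSet v ∩ G.neighborSet u ∧
      IsMaxCliqueIn G (G.neighborSet v ∩ G.neighborSet u) (K \ {v}) := by
  obtain ⟨u, huv, hKu⟩ : ∃ u ∈ {u : V | u ≠ v}, K \ {v} ⊆ G.neighborSet u :=
    exists_subset_neighborSet_of_not_isMaxCliqueIn (fun _ hx => hx.2)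
      (hK.1.subset Set.sdiff_subset) hnot
  have hnadj : ¬ G.Adj u v := fun hadj =>
    hK.not_sdiff_singleton_subset_neighborSet hadj hKu
  have hKvu : K \ {v} ⊆ G.neighborSet v ∩ G.neighborSet u :=
    Set.subset_inter (sdiff_singleton_subset_neighborSet_of_isClique hK.1 hv) hKu
  exact ⟨u, huv, hnadj, hKvu, hK.isMaxCliqueIn_sdiff_singleton hKvu Set.inter_subset_left⟩
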